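/- Let d ≥ 1, let σ be a d×d real matrix, let λ < 0, and let b : ℝ^d → ℝ^d satisfy ⟨b(x) − b(y), x − y⟩ ≤ λ|x − y|² for all x, y ∈ ℝ^d. Let ν be a measure on ℝ^d with ∫_{{|z|≤1}} |z|² ν(dz) < ∞ and ∫_{{|z|>1}} |z| ν(dz) < ∞. Define W(x) := √(1 + |x|²). Then there exist constants C₁, C₂ > 0 such that for all x ∈ ℝ^d, ⟨∇W(x), b(x)⟩ + ∫_{ℝ^d} [W(x + σz) − W(x) − ⟨∇W(x), σz⟩ 1_{|z|≤1}] ν(dz) ≤ C₁ − C₂|x|. -/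

import Mathlib

open MeasureTheory
open scoped RealInnerProductSpace

/-!
The function `W(x) = √(1 + |x|²)` is the norm of `(1, x)` in the Hilbert sum `ℝ ⊕ E`. Hence `W` is
`1`-Lipschitz, and the Cauchy–Schwarz and Young inequalities
`1 + ⟨x, y⟩ ≤ W(x) W(y) ≤ (W(x)² + W(y)²) / 2`, divided by `W(x)`, bound the first-order Taylor
remainder `W(x + h) - W(x) - ⟨∇W(x), h⟩` between `0` and `|h|² / 2`. Compensated jumps therefore
contribute to the generator an amount bounded uniformly in `x`, while dissipativity makes the drift
contribute at most `O(1) - c |x|² / W(x)`, where `|x|² / W(x) ≥ |x| - 1`.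
-/

section JapaneseBracket

variable {E : Type*} [NormedAddCommGroup E]

/-- The Japanese bracket `√(1 + ‖x‖²)`, the smooth substitute for the norm which serves as the
Lyapunov function. -/
noncomputable def japaneseBracket (x : E) : ℝ :=
  Real.sqrt (1 + ‖x‖ ^ 2)

lemma sq_japaneseBracket (x : E) : japaneseBracket x ^ 2 = 1 + ‖x‖ ^ 2 :=
  Real.sq_sqrt (by positivity)

lemma one_le_japaneseBracket (x : E) : 1 ≤ japaneseBracket x :=
  Real.one_le_sqrt.2 (le_add_of_nonneg_right (sq_nonneg _))

lemma japaneseBracket_pos (x : E) : 0 < japaneseBracket x :=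
  zero_lt_one.trans_le (one_le_japaneseBracket x)

lemma norm_toLp_one (x : E) : ‖WithLp.toLp 2 ((1 : ℝ), x)‖ = japaneseBracket x := by
  simp [WithLp.prod_norm_eq_of_L2, japaneseBracket]

lemma lipschitzWith_japaneseBracket : LipschitzWith 1 (japaneseBracket : E → ℝ) := by
  refine LipschitzWith.of_dist_le_mul fun x y => ?_
  calc dist (japaneseBracket x) (japaneseBracket y)
      ≤ ‖WithLp.toLp 2 ((1 : ℝ), x) - WithLp.toLp 2 ((1 : ℝ), y)‖ := by
        rw [← norm_toLp_one x, ← norm_toLp_one y]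
        exact dist_norm_norm_le _ _
    _ = (1 : NNReal) * dist x y := by
        rw [← WithLp.toLp_sub]
        simp [dist_eq_norm]

lemma abs_japaneseBracket_add_sub_le (x h : E) :
    |japaneseBracket (x + h) - japaneseBracket x| ≤ ‖h‖ := by
  simpa [Real.dist_eq] using lipschitzWith_japaneseBracket.dist_le_mul (x + h) x

lemma norm_sub_one_le_sq_norm_div_japaneseBracket (x : E) :
    ‖x‖ - 1 ≤ ‖x‖ ^ 2 / japaneseBracket x := by
  have hW : japaneseBracket x ≤ 1 + ‖x‖ := sqrt_one_add_norm_sq_le x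
  rw [le_div_iff₀ (japaneseBracket_pos x)]
  nlinarith [sq_japaneseBracket x, one_le_japaneseBracket x, norm_nonneg x]

variable [InnerProductSpace ℝ E]

lemma one_add_inner_le_japaneseBracket_mul (x y : E) :
    1 + ⟪x, y⟫ ≤ japaneseBracket x * japaneseBracket y := by
  rw [← norm_toLp_one x, ← norm_toLp_one y]
  simpa [WithLp.prod_inner_apply] using
    real_inner_le_norm (WithLp.toLp 2 ((1 : ℝ), x)) (WithLp.toLp 2 ((1 : ℝ), y))

variable [CompleteSpace E]

lemma hasGradientAt_japaneseBracket (x : E) :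
    HasGradientAt japaneseBracket ((japaneseBracket x)⁻¹ • x) x := by
  have hsq : HasFDerivAt (fun y : E => 1 + ‖y‖ ^ 2) (2 • innerSL ℝ x) x :=
    (hasStrictFDerivAt_norm_sq x).hasFDerivAt.const_add 1
  rw [hasGradientAt_iff_hasFDerivAt]
  refine (hsq.sqrt (by positivity)).congr_fderiv ?_
  ext h
  simp only [smul_apply, coe_innerSL_apply, nsmul_eq_mul, Nat.cast_ofNat,
    smul_eq_mul, japaneseBracket, map_smul, InnerProductSpace.toDual_apply_apply]
  ring

lemma inner_gradient_japaneseBracket (x h : E) :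
    ⟪gradient japaneseBracket x, h⟫ = ⟪x, h⟫ / japaneseBracket x := by
  rw [(hasGradientAt_japaneseBracket x).gradient, real_inner_smul_left, inv_mul_eq_div]

lemma japaneseBracket_taylor_remainder_nonneg (x h : E) :
    0 ≤ japaneseBracket (x + h) - japaneseBracket x - ⟪gradient japaneseBracket x, h⟫ := by
  have hW := japaneseBracket_pos x
  have hCS := one_add_inner_le_japaneseBracket_mul x (x + h)
  rw [inner_add_right, real_inner_self_eq_norm_sq] at hCS
  rw [inner_gradient_japaneseBracket, sub_nonneg, div_le_iff₀ hW]
  linarith [sq_japaneseBracket x]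

lemma japaneseBracket_taylor_remainder_le (x h : E) :
    japaneseBracket (x + h) - japaneseBracket x - ⟪gradient japaneseBracket x, h⟫ ≤
      ‖h‖ ^ 2 / 2 := by
  have hW := japaneseBracket_pos x
  have hYoung := two_mul_le_add_sq (japaneseBracket (x + h)) (japaneseBracket x)
  rw [sq_japaneseBracket (x + h), norm_add_sq_real] at hYoung
  calc japaneseBracket (x + h) - japaneseBracket x - ⟪gradient japaneseBracket x, h⟫
      ≤ ‖h‖ ^ 2 / 2 / japaneseBracket x := by
        rw [inner_gradient_japaneseBracket, le_div_iff₀ hW, sub_mul, div_mul_cancel₀ _ hW.ne']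
        linarith [sq_japaneseBracket x]
    _ ≤ ‖h‖ ^ 2 / 2 := div_le_self (by positivity) (one_le_japaneseBracket x)

lemma inner_gradient_japaneseBracket_le {x v : E} {a c : ℝ} (hc : 0 ≤ c)
    (hv : ⟪v, x⟫ ≤ a - c * ‖x‖ ^ 2) :
    ⟪gradient japaneseBracket x, v⟫ ≤ |a| + c - c * ‖x‖ := by
  have hW := japaneseBracket_pos x
  have ha : a / japaneseBracket x ≤ |a| :=
    (div_le_div_of_nonneg_right (le_abs_self a) hW.le).trans
      (div_le_self (abs_nonneg a) (one_le_japaneseBracket x))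
  calc ⟪gradient japaneseBracket x, v⟫
      ≤ (a - c * ‖x‖ ^ 2) / japaneseBracket x := by
        rw [inner_gradient_japaneseBracket, real_inner_comm]
        gcongr
    _ = a / japaneseBracket x - c * (‖x‖ ^ 2 / japaneseBracket x) := by ring
    _ ≤ |a| - c * (‖x‖ - 1) := by
        gcongr
        exact norm_sub_one_le_sq_norm_div_japaneseBracket x
    _ = |a| + c - c * ‖x‖ := by ring

end JapaneseBracket

lemma inner_le_of_inner_sub_le {E : Type*} [NormedAddCommGroup E] [InnerProductSpace ℝ E]
    {u v x : E} {c : ℝ} (hc : 0 < c) (h : ⟪u - v, x⟫ ≤ -c * ‖x‖ ^ 2) :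
    ⟪u, x⟫ ≤ ‖v‖ ^ 2 / (2 * c) - c / 2 * ‖x‖ ^ 2 := by
  have hYoung : ‖v‖ * ‖x‖ ≤ ‖v‖ ^ 2 / (2 * c) + c / 2 * ‖x‖ ^ 2 := by
    have hsq : ‖v‖ ^ 2 / (2 * c) + c / 2 * ‖x‖ ^ 2 - ‖v‖ * ‖x‖ =
        (‖v‖ - c * ‖x‖) ^ 2 / (2 * c) := by
      field_simp
      ring
    linarith [show 0 ≤ (‖v‖ - c * ‖x‖) ^ 2 / (2 * c) by positivity]
  rw [inner_sub_left] at h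
  linarith [real_inner_le_norm v x]

lemma integrable_min_sq_norm_norm {F : Type*} [NormedAddCommGroup F] [MeasurableSpace F]
    [OpensMeasurableSpace F] {ν : Measure F}
    (hsmall : IntegrableOn (fun z => ‖z‖ ^ 2) {z : F | ‖z‖ ≤ 1} ν)
    (hlarge : IntegrableOn (fun z => ‖z‖) {z : F | 1 < ‖z‖} ν) :
    Integrable (fun z => min (‖z‖ ^ 2) ‖z‖) ν := by
  have hmeas : Measurable fun z : F => min (‖z‖ ^ 2) ‖z‖ := by fun_prop
  have habs (z : F) : ‖min (‖z‖ ^ 2) ‖z‖‖ = min (‖z‖ ^ 2) ‖z‖ :=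
    Real.norm_of_nonneg (by positivity)
  have hcover : {z : F | ‖z‖ ≤ 1} ∪ {z | 1 < ‖z‖} = Set.univ :=
    Set.eq_univ_of_forall fun z => le_or_gt ‖z‖ 1
  rw [← integrableOn_univ, ← hcover]
  exact .union
    (hsmall.mono' hmeas.aestronglyMeasurable
      (.of_forall fun z => (habs z).trans_le (min_le_left _ _)))
    (hlarge.mono' hmeas.aestronglyMeasurable
      (.of_forall fun z => (habs z).trans_le (min_le_right _ _)))

section LevyGenerator

variable {E F : Type*} [NormedAddCommGroup E] [InnerProductSpace ℝ E] [CompleteSpace E]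
  [NormedAddCommGroup F] [NormedSpace ℝ F]

/-- The increment of `f` at `x` caused by a jump `z` of the noise, which enters through `T`.
Jumps of norm at most one are compensated by the first-order Taylor term. This is the integrand of
the nonlocal part of the generator. -/
noncomputable def compensatedIncrement (f : E → ℝ) (T : F →L[ℝ] E) (x : E) (z : F) : ℝ :=
  f (x + T z) - f x - {z : F | ‖z‖ ≤ 1}.indicator (fun z => ⟪gradient f x, T z⟫) z

/-- The generator of `dX_t = b(X_t) dt + T dL_t`, where `L` is a pure-jump Lévy process with Lévy
measure `ν`, applied to `f`. The integral is Bochner's, hence `0` if the compensated increment is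
not integrable. -/
noncomputable def levyGenerator [MeasurableSpace F] (b : E → E) (T : F →L[ℝ] E) (ν : Measure F)
    (f : E → ℝ) (x : E) : ℝ :=
  ⟪gradient f x, b x⟫ + ∫ z, compensatedIncrement f T x z ∂ν

lemma abs_compensatedIncrement_japaneseBracket_le (T : F →L[ℝ] E) (x : E) (z : F) :
    |compensatedIncrement japaneseBracket T x z| ≤
      max (‖T‖ ^ 2 / 2) ‖T‖ * min (‖z‖ ^ 2) ‖z‖ := by
  have hT : ‖T z‖ ≤ ‖T‖ * ‖z‖ := T.le_opNorm z
  rcases le_or_gt ‖z‖ 1 with hz | hz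
  · have hmin : min (‖z‖ ^ 2) ‖z‖ = ‖z‖ ^ 2 :=
      min_eq_left (pow_le_of_le_one (norm_nonneg z) hz two_ne_zero)
    rw [compensatedIncrement, Set.indicator_of_mem (show z ∈ {z : F | ‖z‖ ≤ 1} from hz), hmin,
      abs_of_nonneg (japaneseBracket_taylor_remainder_nonneg x (T z))]
    calc japaneseBracket (x + T z) - japaneseBracket x - ⟪gradient japaneseBracket x, T z⟫
        ≤ ‖T z‖ ^ 2 / 2 := japaneseBracket_taylor_remainder_le x (T z)
      _ ≤ (‖T‖ * ‖z‖) ^ 2 / 2 := by gcongr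
      _ = ‖T‖ ^ 2 / 2 * ‖z‖ ^ 2 := by ring
      _ ≤ max (‖T‖ ^ 2 / 2) ‖T‖ * ‖z‖ ^ 2 := by gcongr; exact le_max_left _ _
  · have hmin : min (‖z‖ ^ 2) ‖z‖ = ‖z‖ := min_eq_right (le_self_pow₀ hz.le two_ne_zero)
    rw [compensatedIncrement, Set.indicator_of_notMem (show z ∉ {z : F | ‖z‖ ≤ 1} from hz.not_ge),
      sub_zero, hmin]
    calc |japaneseBracket (x + T z) - japaneseBracket x|
        ≤ ‖T z‖ := abs_japaneseBracket_add_sub_le x (T z)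
      _ ≤ ‖T‖ * ‖z‖ := hT
      _ ≤ max (‖T‖ ^ 2 / 2) ‖T‖ * ‖z‖ := by gcongr; exact le_max_right _ _

variable [MeasurableSpace F] [OpensMeasurableSpace F]

lemma measurable_compensatedIncrement {f : E → ℝ} (hf : Continuous f) (T : F →L[ℝ] E) (x : E) :
    Measurable (compensatedIncrement f T x) := by
  have hjump : Continuous fun z => f (x + T z) - f x := by fun_prop
  have hlinear : Continuous fun z => ⟪gradient f x, T z⟫ := by fun_prop
  exact hjump.measurable.sub
    (hlinear.measurable.indicator (measurableSet_le measurable_norm measurable_const))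

lemma integrable_compensatedIncrement_japaneseBracket {ν : Measure F}
    (hν : Integrable (fun z => min (‖z‖ ^ 2) ‖z‖) ν) (T : F →L[ℝ] E) (x : E) :
    Integrable (compensatedIncrement japaneseBracket T x) ν :=
  (hν.const_mul _).mono'
    (measurable_compensatedIncrement
      lipschitzWith_japaneseBracket.continuous T x).aestronglyMeasurable
    (.of_forall (abs_compensatedIncrement_japaneseBracket_le T x))

theorem stmt_19_general {b : E → E} {a c : ℝ} (hc : 0 < c)
    (hb : ∀ x, ⟪b x, x⟫ ≤ a - c * ‖x‖ ^ 2) (T : F →L[ℝ] E) {ν : Measure F}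
    (hν : Integrable (fun z => min (‖z‖ ^ 2) ‖z‖) ν) :
    ∃ C₁ > (0 : ℝ), ∃ C₂ > (0 : ℝ), ∀ x : E,
      Integrable (compensatedIncrement japaneseBracket T x) ν ∧
        levyGenerator b T ν japaneseBracket x ≤ C₁ - C₂ * ‖x‖ := by
  set J := ∫ z, max (‖T‖ ^ 2 / 2) ‖T‖ * min (‖z‖ ^ 2) ‖z‖ ∂ν
  have hC₁ : 0 < |a| + c + J :=
    add_pos_of_pos_of_nonneg (by positivity) (integral_nonneg fun z => by positivity)
  refine ⟨|a| + c + J, hC₁, c, hc, fun x => ?_⟩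
  have hint := integrable_compensatedIncrement_japaneseBracket hν T x
  have hdrift := inner_gradient_japaneseBracket_le hc.le (hb x)
  have hjumps : ∫ z, compensatedIncrement japaneseBracket T x z ∂ν ≤ J :=
    integral_mono hint (hν.const_mul _) fun z =>
      (le_abs_self _).trans (abs_compensatedIncrement_japaneseBracket_le T x z)
  refine ⟨hint, ?_⟩
  rw [levyGenerator]
  linarith

end LevyGenerator

/-- Lyapunov bound (W2): for a dissipative drift (`⟨b(x)−b(y), x−y⟩ ≤ λ|x−y|²` with
`λ < 0`) and a Lévy measure `ν` with `∫_{|z|≤1}|z|²ν(dz) < ∞`, `∫_{|z|>1}|z|ν(dz) < ∞`,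
the generator applied to `W(x) = √(1+|x|²)` satisfies `ℒW(x) ≤ C₁ − C₂|x|`. -/
theorem stmt_19 (d : ℕ) (hd : 1 ≤ d) (σ : Matrix (Fin d) (Fin d) ℝ) (lam : ℝ)
    (hlam : lam < 0)
    (b : EuclideanSpace ℝ (Fin d) → EuclideanSpace ℝ (Fin d))
    (hb : ∀ x y, ⟪b x - b y, x - y⟫ ≤ lam * ‖x - y‖ ^ 2)
    (ν : Measure (EuclideanSpace ℝ (Fin d)))
    (hν1 : ∫⁻ z in {z : EuclideanSpace ℝ (Fin d) | ‖z‖ ≤ 1},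
        ENNReal.ofReal (‖z‖ ^ 2) ∂ν ≠ ⊤)
    (hν2 : ∫⁻ z in {z : EuclideanSpace ℝ (Fin d) | 1 < ‖z‖},
        ENNReal.ofReal ‖z‖ ∂ν ≠ ⊤) :
    ∃ C₁ > (0:ℝ), ∃ C₂ > (0:ℝ), ∀ x : EuclideanSpace ℝ (Fin d),
      ⟪gradient (fun y : EuclideanSpace ℝ (Fin d) => Real.sqrt (1 + ‖y‖ ^ 2)) x, b x⟫ +
        ∫ z, (Real.sqrt (1 + ‖x + Matrix.toEuclideanLin σ z‖ ^ 2) -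
            Real.sqrt (1 + ‖x‖ ^ 2) -
            Set.indicator {z : EuclideanSpace ℝ (Fin d) | ‖z‖ ≤ 1}
              (fun z =>
                ⟪gradient (fun y : EuclideanSpace ℝ (Fin d) => Real.sqrt (1 + ‖y‖ ^ 2)) x,
                  Matrix.toEuclideanLin σ z⟫) z) ∂ν ≤
        C₁ - C₂ * ‖x‖ := by
  have hcoercive (x) : ⟪b x, x⟫ ≤ ‖b 0‖ ^ 2 / (2 * -lam) - -lam / 2 * ‖x‖ ^ 2 :=
    inner_le_of_inner_sub_le (neg_pos.2 hlam) (by simpa using hb x 0)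
  have hsmall : IntegrableOn (fun z => ‖z‖ ^ 2) {z : EuclideanSpace ℝ (Fin d) | ‖z‖ ≤ 1} ν :=
    (lintegral_ofReal_ne_top_iff_integrable (by fun_prop) (.of_forall fun _ => by positivity)).1 hν1
  have hlarge : IntegrableOn (fun z => ‖z‖) {z : EuclideanSpace ℝ (Fin d) | 1 < ‖z‖} ν :=
    (lintegral_ofReal_ne_top_iff_integrable (by fun_prop) (.of_forall norm_nonneg)).1 hν2
  obtain ⟨C₁, hC₁, C₂, hC₂, hW⟩ := stmt_19_general (half_pos (neg_pos.2 hlam)) hcoercive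
    (Matrix.toEuclideanLin σ).toContinuousLinearMap (integrable_min_sq_norm_norm hsmall hlarge)
  exact ⟨C₁, hC₁, C₂, hC₂, fun x => (hW x).2⟩
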